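/- Let Π := Dᴴ * !![0,0;0,1] * D (the rotated single-qubit projector Dᴴ|1⟩⟨1|D). Let P be one of the matrices X, -X, Z, -Z, and let Q be any element of {X, -X, Y, -Y, Z, -Z}. Then for every θ ∈ ℝ, the matrix ρ = (1/2 : ℂ)•1 + ((Real.cos (2θ))/2 : ℂ)•Q + ((Real.sin (2θ))/4 : ℂ)•(Complex.I•(P*Q - Q*P)) satisfies Re(trace (ρ * Π)) ≥ sin²(π/8). (This is Case II.2.a in the proof of Lemma B.7: when the rotation Pauli P is not ±Y, the reduced state ½I + ½cos(2θ)P* + ¼sin(2θ)·i[P,P*] has energy at least sin²(π/8) under the rotated projector, regardless of θ.) -/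

import Mathlib

open Matrix

noncomputable def PauliX : Matrix (Fin 2) (Fin 2) ℂ := !![0, 1; 1, 0]

noncomputable def PauliY : Matrix (Fin 2) (Fin 2) ℂ := !![0, -Complex.I; Complex.I, 0]

noncomputable def PauliZ : Matrix (Fin 2) (Fin 2) ℂ := !![1, 0; 0, -1]

noncomputable def Drot : Matrix (Fin 2) (Fin 2) ℂ :=
  !![(Real.cos (Real.pi / 8) : ℂ), -(Real.sin (Real.pi / 8) : ℂ);
     (Real.sin (Real.pi / 8) : ℂ), (Real.cos (Real.pi / 8) : ℂ)]

/-- The rotated single-qubit projector `Dᴴ |1⟩⟨1| D`. -/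
noncomputable def rotProj : Matrix (Fin 2) (Fin 2) ℂ := Drotᴴ * !![0, 0; 0, 1] * Drot

/-!
In the Bloch picture `rotProj = ½ (1 + n ⬝ σ)` with `n = (√2/2) (1, 0, -1)`, so a state with Bloch
vector `r` has energy `½ (1 + r ⬝ n)`. If `P = p ⬝ σ` and `Q = q ⬝ σ`, then
`r = cos 2θ • q - sin 2θ • p ⨯₃ q`. When `p` has no `Y`-component,
`r ⬝ n = (√2/2) (cos 2θ (q₀ - q₂) + sin 2θ (p₀ + p₂) q₁)`. If also `|p₀ + p₂| ≤ 1`, as for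
`P = ±X, ±Z`, each coordinate of `q` enters with a coefficient of absolute value at most `√2/2`,
and the energy is at least `½ (1 - √2/2) = sin² (π/8)` as soon as `q` lies in the unit `ℓ¹`-ball.
-/

/-- The Pauli combination `v ⬝ σ = v₀ X + v₁ Y + v₂ Z` of a real vector `v`: twice the traceless
part of the single-qubit state `½ (1 + v ⬝ σ)` with Bloch vector `v`. The coordinates indexed by
`Fin 3` are ordered `X, Y, Z`. -/
noncomputable def pauliDot : (Fin 3 → ℝ) →ₗ[ℝ] Matrix (Fin 2) (Fin 2) ℂ :=
  Fintype.linearCombination ℝ ![PauliX, PauliY, PauliZ]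

theorem pauliDot_eq_of (v : Fin 3 → ℝ) :
    pauliDot v = !![(v 2 : ℂ), v 0 - v 1 * Complex.I; v 0 + v 1 * Complex.I, -v 2] := by
  ext i j
  fin_cases i <;> fin_cases j <;>
    simp [pauliDot, Fintype.linearCombination_apply, Fin.sum_univ_three, PauliX, PauliY, PauliZ,
      sub_eq_add_neg]

theorem pauliDot_single_zero : pauliDot (Pi.single 0 1) = PauliX := by
  simp [pauliDot]

theorem pauliDot_single_one : pauliDot (Pi.single 1 1) = PauliY := by
  simp [pauliDot]

theorem pauliDot_single_two : pauliDot (Pi.single 2 1) = PauliZ := by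
  simp [pauliDot]

theorem pauliDot_mul_pauliDot (v w : Fin 3 → ℝ) :
    pauliDot v * pauliDot w = (v ⬝ᵥ w) • 1 + Complex.I • pauliDot (v ⨯₃ w) := by
  simp only [pauliDot_eq_of, cross_apply, vec3_dotProduct, mul_fin_two, one_fin_two, smul_of,
    smul_cons, smul_empty, of_add_of, add_cons, head_cons, tail_cons, empty_add_empty, cons_val,
    Complex.real_smul, smul_eq_mul, Complex.ofReal_add, Complex.ofReal_sub, Complex.ofReal_mul]
  congr! 3 <;> grind [Complex.I_mul_I]

theorem I_smul_commutator_pauliDot (v w : Fin 3 → ℝ) :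
    Complex.I • (pauliDot v * pauliDot w - pauliDot w * pauliDot v) =
      -(2 : ℝ) • pauliDot (v ⨯₃ w) := by
  rw [pauliDot_mul_pauliDot, pauliDot_mul_pauliDot, dotProduct_comm w v, ← cross_anticomm v w,
    map_neg, smul_neg, add_sub_add_left_eq_sub, sub_neg_eq_add, ← two_smul ℝ, smul_comm,
    smul_smul, Complex.I_mul_I, neg_one_smul, smul_neg, neg_smul]

theorem trace_pauliDot (v : Fin 3 → ℝ) : trace (pauliDot v) = 0 := by
  simp [pauliDot_eq_of, trace_fin_two]

theorem trace_one_add_pauliDot_mul_one_add_pauliDot (v w : Fin 3 → ℝ) :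
    trace ((1 + pauliDot v) * (1 + pauliDot w)) = ((2 * (1 + v ⬝ᵥ w) : ℝ) : ℂ) := by
  simp only [add_mul, mul_add, one_mul, mul_one, pauliDot_mul_pauliDot, trace_add, trace_smul,
    trace_pauliDot, trace_one, Fintype.card_fin, smul_zero, add_zero, Complex.real_smul]
  push_cast
  ring

theorem conjTranspose_rotation_mul_proj_mul_rotation (φ : ℝ) :
    (!![(Real.cos φ : ℂ), -(Real.sin φ : ℂ); (Real.sin φ : ℂ), (Real.cos φ : ℂ)])ᴴ *
        !![0, 0; 0, 1] *
        !![(Real.cos φ : ℂ), -(Real.sin φ : ℂ); (Real.sin φ : ℂ), (Real.cos φ : ℂ)] =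
      (1 / 2 : ℝ) • (1 + pauliDot ![Real.sin (2 * φ), 0, -Real.cos (2 * φ)]) := by
  have hsc : (Real.sin φ : ℂ) ^ 2 + (Real.cos φ : ℂ) ^ 2 = 1 := by
    exact_mod_cast Real.sin_sq_add_cos_sq φ
  rw [pauliDot_eq_of, Real.sin_two_mul, Real.cos_two_mul]
  ext i j
  fin_cases i <;> fin_cases j <;>
    simp only [mul_apply, conjTranspose_apply, one_apply, Matrix.smul_apply, Matrix.add_apply,
      of_apply, Fin.sum_univ_two, cons_val, Fin.zero_eta, Fin.mk_one, RCLike.star_def,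
      Complex.conj_ofReal, Complex.real_smul] <;>
    push_cast [-Complex.ofReal_cos, -Complex.ofReal_sin] <;> grind

theorem rotProj_eq_half_smul_one_add_pauliDot :
    rotProj = (1 / 2 : ℝ) • (1 + pauliDot ![√2 / 2, 0, -(√2 / 2)]) := by
  rw [rotProj, Drot, conjTranspose_rotation_mul_proj_mul_rotation,
    show 2 * (Real.pi / 8) = Real.pi / 4 by ring, Real.sin_pi_div_four, Real.cos_pi_div_four]

theorem rotated_state_eq_half_smul_one_add_pauliDot (c s : ℝ) (p q : Fin 3 → ℝ) :
    (1 / 2 : ℂ) • (1 : Matrix (Fin 2) (Fin 2) ℂ) + ((c / 2 : ℝ) : ℂ) • pauliDot q +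
        ((s / 4 : ℝ) : ℂ) •
          (Complex.I • (pauliDot p * pauliDot q - pauliDot q * pauliDot p)) =
      (1 / 2 : ℝ) • (1 + pauliDot (c • q - s • p ⨯₃ q)) := by
  have half : (1 / 2 : ℂ) = ((1 / 2 : ℝ) : ℂ) := by norm_num
  rw [I_smul_commutator_pauliDot, half]
  simp only [Complex.coe_smul, map_sub, map_smul]
  module

theorem abs_dotProduct_le_sum_abs {ι R : Type*} [Fintype ι] [Ring R] [LinearOrder R]
    [IsOrderedRing R] {u : ι → R} (hu : ∀ i, |u i| ≤ 1) (v : ι → R) :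
    |u ⬝ᵥ v| ≤ ∑ i, |v i| :=
  (Finset.abs_sum_le_sum_abs _ _).trans <| Finset.sum_le_sum fun i _ ↦ by
    rw [abs_mul]
    exact mul_le_of_le_one_left (abs_nonneg _) (hu i)

theorem neg_sqrt_two_div_two_le_blochVector_dotProduct {c s : ℝ} (hc : |c| ≤ 1) (hs : |s| ≤ 1)
    {p q : Fin 3 → ℝ} (hp₁ : p 1 = 0) (hp : |p 0 + p 2| ≤ 1) (hq : ∑ i, |q i| ≤ 1) :
    -(√2 / 2) ≤ (c • q - s • p ⨯₃ q) ⬝ᵥ ![√2 / 2, 0, -(√2 / 2)] := by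
  have hsp : |s| * |p 0 + p 2| ≤ 1 := mul_le_one₀ hs (abs_nonneg _) hp
  have hu : ∀ i, |![c, s * (p 0 + p 2), -c] i| ≤ 1 := by
    simp [Fin.forall_fin_succ, abs_mul, hc, hsp]
  have hbound : -1 ≤ ![c, s * (p 0 + p 2), -c] ⬝ᵥ q :=
    (abs_le.mp ((abs_dotProduct_le_sum_abs hu q).trans hq)).1
  calc -(√2 / 2) = √2 / 2 * -1 := by ring
    _ ≤ √2 / 2 * ![c, s * (p 0 + p 2), -c] ⬝ᵥ q := by gcongr
    _ = (c • q - s • p ⨯₃ q) ⬝ᵥ ![√2 / 2, 0, -(√2 / 2)] := by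
      simp only [vec3_dotProduct, cross_apply, hp₁, Pi.sub_apply, Pi.smul_apply, smul_eq_mul,
        cons_val]
      ring

theorem sin_sq_pi_div_eight : Real.sin (Real.pi / 8) ^ 2 = (1 - √2 / 2) / 2 := by
  rw [Real.sin_sq_eq_half_sub, show 2 * (Real.pi / 8) = Real.pi / 4 by ring,
    Real.cos_pi_div_four]
  ring

theorem energy_lower_bound_case_II_2a_general {c s : ℝ} (hc : |c| ≤ 1) (hs : |s| ≤ 1)
    {p q : Fin 3 → ℝ} (hp₁ : p 1 = 0) (hp : |p 0 + p 2| ≤ 1) (hq : ∑ i, |q i| ≤ 1) :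
    Real.sin (Real.pi / 8) ^ 2 ≤
      (trace (((1 / 2 : ℂ) • (1 : Matrix (Fin 2) (Fin 2) ℂ) + ((c / 2 : ℝ) : ℂ) • pauliDot q +
        ((s / 4 : ℝ) : ℂ) •
          (Complex.I • (pauliDot p * pauliDot q - pauliDot q * pauliDot p))) * rotProj)).re := by
  rw [rotated_state_eq_half_smul_one_add_pauliDot, rotProj_eq_half_smul_one_add_pauliDot,
    smul_mul_smul_comm, trace_smul, trace_one_add_pauliDot_mul_one_add_pauliDot,
    Complex.smul_re, Complex.ofReal_re, smul_eq_mul, sin_sq_pi_div_eight]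
  linarith [neg_sqrt_two_div_two_le_blochVector_dotProduct hc hs hp₁ hp hq]

theorem exists_pauliDot_eq_of_signed_pauliX_or_pauliZ {P : Matrix (Fin 2) (Fin 2) ℂ}
    (hP : P = PauliX ∨ P = -PauliX ∨ P = PauliZ ∨ P = -PauliZ) :
    ∃ p : Fin 3 → ℝ, p 1 = 0 ∧ |p 0 + p 2| ≤ 1 ∧ pauliDot p = P := by
  rcases hP with rfl | rfl | rfl | rfl
  · exact ⟨Pi.single 0 1, by simp, by simp, pauliDot_single_zero⟩
  · exact ⟨-Pi.single 0 1, by simp, by simp, by rw [map_neg, pauliDot_single_zero]⟩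
  · exact ⟨Pi.single 2 1, by simp, by simp, pauliDot_single_two⟩
  · exact ⟨-Pi.single 2 1, by simp, by simp, by rw [map_neg, pauliDot_single_two]⟩

theorem exists_pauliDot_eq_of_signed_pauli {Q : Matrix (Fin 2) (Fin 2) ℂ}
    (hQ : Q = PauliX ∨ Q = -PauliX ∨ Q = PauliY ∨ Q = -PauliY ∨ Q = PauliZ ∨ Q = -PauliZ) :
    ∃ q : Fin 3 → ℝ, ∑ i, |q i| ≤ 1 ∧ pauliDot q = Q := by
  have hsum (i : Fin 3) : ∑ j, |(Pi.single i 1 : Fin 3 → ℝ) j| ≤ 1 := by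
    simp [Pi.single_apply, apply_ite abs]
  have hsum_neg (i : Fin 3) : ∑ j, |(-Pi.single i 1 : Fin 3 → ℝ) j| ≤ 1 := by
    simpa only [Pi.neg_apply, abs_neg] using hsum i
  rcases hQ with rfl | rfl | rfl | rfl | rfl | rfl
  · exact ⟨Pi.single 0 1, hsum 0, pauliDot_single_zero⟩
  · exact ⟨-Pi.single 0 1, hsum_neg 0, by rw [map_neg, pauliDot_single_zero]⟩
  · exact ⟨Pi.single 1 1, hsum 1, pauliDot_single_one⟩
  · exact ⟨-Pi.single 1 1, hsum_neg 1, by rw [map_neg, pauliDot_single_one]⟩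
  · exact ⟨Pi.single 2 1, hsum 2, pauliDot_single_two⟩
  · exact ⟨-Pi.single 2 1, hsum_neg 2, by rw [map_neg, pauliDot_single_two]⟩

theorem energy_lower_bound_case_II_2a
    (θ : ℝ) (P Q : Matrix (Fin 2) (Fin 2) ℂ)
    (hP : P = PauliX ∨ P = -PauliX ∨ P = PauliZ ∨ P = -PauliZ)
    (hQ : Q = PauliX ∨ Q = -PauliX ∨ Q = PauliY ∨ Q = -PauliY ∨ Q = PauliZ ∨ Q = -PauliZ) :
    Real.sin (Real.pi / 8) ^ 2 ≤
      (Matrix.trace (((1 / 2 : ℂ) • (1 : Matrix (Fin 2) (Fin 2) ℂ) +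
        ((Real.cos (2 * θ) / 2 : ℝ) : ℂ) • Q +
        ((Real.sin (2 * θ) / 4 : ℝ) : ℂ) • (Complex.I • (P * Q - Q * P))) * rotProj)).re := by
  obtain ⟨p, hp₁, hp, rfl⟩ := exists_pauliDot_eq_of_signed_pauliX_or_pauliZ hP
  obtain ⟨q, hq, rfl⟩ := exists_pauliDot_eq_of_signed_pauli hQ
  exact energy_lower_bound_case_II_2a_general (Real.abs_cos_le_one _) (Real.abs_sin_le_one _)
    hp₁ hp hq
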